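/- (Infinitesimal generator of the stable semigroup, α ∈ (1,2).) Let α ∈ (1,2), m₁, m₂ ∈ [0,∞) with m₁ + m₂ > 0, β ∈ ℝ, and let f be a complex-valued Schwartz function on ℝ. Then for every x ∈ ℝ, lim_{t→0⁺} (P_t f(x) - f(x))/t = -x f'(x) + Γ_α f'(x) + ∫_ℝ (f'(x+u) - f'(x)·1_{|u|≤1}) u ν_α(du), the integral converging absolutely. -/

import Mathlib

open MeasureTheory

/-- The α-stable Lévy measure on ℝ with density
`u ↦ m₁ u^(-α-1) 1_{(0,∞)}(u) + m₂ |u|^(-α-1) 1_{(-∞,0)}(u)` w.r.t. Lebesgue measure. -/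
noncomputable def nuStable (α m₁ m₂ : ℝ) : Measure ℝ :=
  (volume : Measure ℝ).withDensity fun u =>
    ENNReal.ofReal (if 0 < u then m₁ * u ^ (-α - 1) else if u < 0 then m₂ * |u| ^ (-α - 1) else 0)

/-- Location parameter for `α ∈ [1,2)`:
`Γ_α = β + 2(m₁-m₂)∫₀^1 u^{2-α}(1+u²)^{-1} du - (m₁-m₂)∫₀^∞ min(1,u²) u^{-α}(1+u²)^{-1} du`. -/
noncomputable def Gamma12 (α m₁ m₂ β : ℝ) : ℝ :=
  β + 2 * (m₁ - m₂) * (∫ u in Set.Ioc (0 : ℝ) 1, u ^ (2 - α) / (1 + u ^ 2)) -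
    (m₁ - m₂) * ∫ u in Set.Ioi (0 : ℝ), min 1 (u ^ 2) * u ^ (-α) / (1 + u ^ 2)

/-- Characteristic function of the `α`-stable law, `α ∈ [1,2)`:
`ψ_α(t) = exp(itΓ_α + ∫_ℝ (e^{itu} - 1 - itu·1_{|u|≤1}) ν_α(du))`. -/
noncomputable def psi12 (α m₁ m₂ β : ℝ) (t : ℝ) : ℂ :=
  Complex.exp (Complex.I * t * (Gamma12 α m₁ m₂ β) +
    ∫ u : ℝ, (Complex.exp (Complex.I * t * u) - 1 -
      (if |u| ≤ 1 then Complex.I * t * u else 0)) ∂(nuStable α m₁ m₂))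

/-- Fourier transform `f̂(ξ) = ∫_ℝ f(x) e^{-ixξ} dx`. -/
noncomputable def fourierT (g : ℝ → ℂ) (ξ : ℝ) : ℂ :=
  ∫ x : ℝ, g x * Complex.exp (-(Complex.I * x * ξ))

/-- The stable Fourier-multiplier family
`P_t f(x) = (1/2π) ∫_ℝ f̂(ξ) e^{iξx e^{-t}} ψ_α(ξ)/ψ_α(e^{-t}ξ) dξ`, `α ∈ [1,2)`. -/
noncomputable def Pt (α m₁ m₂ β : ℝ) (t : ℝ) (g : ℝ → ℂ) (x : ℝ) : ℂ :=
  ((1 / (2 * Real.pi) : ℝ) : ℂ) *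
    ∫ ξ : ℝ, fourierT g ξ * Complex.exp (Complex.I * ξ * x * ((Real.exp (-t) : ℝ) : ℂ)) *
      psi12 α m₁ m₂ β ξ / psi12 α m₁ m₂ β (Real.exp (-t) * ξ)

/-- density -/
noncomputable def dens (α m₁ m₂ : ℝ) (u : ℝ) : ℝ :=
  if 0 < u then m₁ * u ^ (-α - 1) else if u < 0 then m₂ * |u| ^ (-α - 1) else 0

lemma dens_meas (α m₁ m₂ : ℝ) : Measurable (dens α m₁ m₂) := by
  unfold dens
  refine Measurable.ite measurableSet_Ioi (by fun_prop) (Measurable.ite measurableSet_Iio ?_ (by fun_prop))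
  exact (measurable_id.abs.pow_const _).const_mul _

lemma dens_nonneg {α m₁ m₂ : ℝ} (hm₁ : 0 ≤ m₁) (hm₂ : 0 ≤ m₂) (u : ℝ) : 0 ≤ dens α m₁ m₂ u := by
  unfold dens
  split_ifs <;> positivity

lemma dens_le {α m₁ m₂ : ℝ} (hm₁ : 0 ≤ m₁) (hm₂ : 0 ≤ m₂) (u : ℝ) :
    dens α m₁ m₂ u ≤ (m₁ + m₂) * |u| ^ (-α - 1) := by
  unfold dens
  split_ifs with h h'
  · rw [abs_of_pos h]; gcongr; linarith
  · gcongr; linarith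
  · positivity

lemma dens_scale {α m₁ m₂ s : ℝ} (hs : 0 < s) (u : ℝ) :
    dens α m₁ m₂ (s * u) = s ^ (-α - 1) * dens α m₁ m₂ u := by
  unfold dens
  have h1 : 0 < s * u ↔ 0 < u := by simp [hs]
  have h2 : s * u < 0 ↔ u < 0 := by rw [mul_neg_iff]; constructor; (rintro (h | h) <;> linarith); (intro h; left; exact ⟨hs, h⟩)
  simp only [h1, h2]
  split_ifs with h h'
  · rw [Real.mul_rpow hs.le h.le]; ring
  · rw [abs_mul, abs_of_pos hs, Real.mul_rpow hs.le (abs_nonneg _)]; ring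
  · simp

lemma nu_eq (α m₁ m₂ : ℝ) : nuStable α m₁ m₂ =
    (volume : Measure ℝ).withDensity fun u => ENNReal.ofReal (dens α m₁ m₂ u) := rfl

instance (α m₁ m₂ : ℝ) : SFinite (nuStable α m₁ m₂) := by
  rw [nu_eq]; infer_instance

lemma integral_nu {E : Type*} [NormedAddCommGroup E] [NormedSpace ℝ E] {α m₁ m₂ : ℝ} (hm₁ : 0 ≤ m₁) (hm₂ : 0 ≤ m₂) (g : ℝ → E) :
    ∫ u, g u ∂(nuStable α m₁ m₂) = ∫ u, dens α m₁ m₂ u • g u := by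
  rw [nu_eq, integral_withDensity_eq_integral_toReal_smul (dens_meas _ _ _).ennreal_ofReal (by simp)]
  simp [ENNReal.toReal_ofReal, dens_nonneg hm₁ hm₂]

lemma integrable_M {α m₁ m₂ : ℝ} (hα : 1 < α) (hα2 : α < 2) (hm₁ : 0 ≤ m₁) (hm₂ : 0 ≤ m₂) :
    Integrable (fun u : ℝ => min (u ^ 2) |u|) (nuStable α m₁ m₂) := by
  rw [nu_eq, integrable_withDensity_iff_integrable_smul' (dens_meas _ _ _).ennreal_ofReal (by simp)]
  simp only [ENNReal.toReal_ofReal, dens_nonneg hm₁ hm₂, smul_eq_mul]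
  have key : IntegrableOn (fun u : ℝ => |u| ^ (-α - 1) * min (u ^ 2) |u|) (Set.Ioi 0) := by
    rw [← Set.Ioc_union_Ioi_eq_Ioi (zero_le_one (α := ℝ))]
    refine IntegrableOn.union ?_ ?_
    · have : IntegrableOn (fun u : ℝ => u ^ (1 - α)) (Set.Ioc 0 1) := by
        rw [← intervalIntegrable_iff_integrableOn_Ioc_of_le zero_le_one]
        exact intervalIntegral.intervalIntegrable_rpow' (by linarith)
      refine this.congr_fun ?_ measurableSet_Ioc
      intro u hu
      have h0 := hu.1
      have h1 := hu.2
      simp only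
      rw [abs_of_pos h0, min_eq_left (by nlinarith), ← Real.rpow_natCast, ← Real.rpow_add h0]
      congr 1; push_cast; ring
    · have : IntegrableOn (fun u : ℝ => u ^ (-α)) (Set.Ioi 1) :=
        integrableOn_Ioi_rpow_of_lt (by linarith) one_pos
      refine this.congr_fun ?_ measurableSet_Ioi
      intro u hu
      have h1 : 1 < u := hu
      have h0 : 0 < u := by linarith
      simp only
      rw [abs_of_pos h0, min_eq_right (by nlinarith)]
      conv_rhs => rw [← Real.rpow_one u, ← Real.rpow_mul h0.le, ← Real.rpow_add h0]
      congr 1; ring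
  have key2 : Integrable (fun u : ℝ => |u| ^ (-α - 1) * min (u ^ 2) |u|) := by
    rw [← integrableOn_univ, ← Set.Iic_union_Ioi (a := (0 : ℝ))]
    refine IntegrableOn.union ?_ key
    rw [integrableOn_Iic_iff_integrableOn_Iio]
    have := (Measure.measurePreserving_neg (volume : Measure ℝ)).integrableOn_comp_preimage
      (MeasurableEquiv.neg ℝ).measurableEmbedding (f := fun u : ℝ => |u| ^ (-α - 1) * min (u ^ 2) |u|) (s := Set.Ioi 0)
    have h2 := this.2 key
    simpa [Function.comp_def] using h2
  refine (key2.const_mul (m₁ + m₂)).mono' ?_ ?_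
  · exact ((dens_meas _ _ _).mul (by fun_prop)).aestronglyMeasurable
  · refine Filter.Eventually.of_forall fun u => ?_
    have h : 0 ≤ min (u ^ 2) |u| := by positivity
    rw [Real.norm_of_nonneg (mul_nonneg (dens_nonneg hm₁ hm₂ u) h), ← mul_assoc]
    exact mul_le_mul_of_nonneg_right (dens_le hm₁ hm₂ u) h

/-- kernel -/
noncomputable def Bk (ξ u : ℝ) : ℂ :=
  (Complex.exp (Complex.I * ξ * u) - (if |u| ≤ 1 then 1 else 0)) * u

lemma norm_expI (a b : ℝ) : ‖Complex.exp (Complex.I * a * b)‖ = 1 := by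
  rw [show Complex.I * a * b = ((a * b : ℝ) : ℂ) * Complex.I by push_cast; ring]
  exact Complex.norm_exp_ofReal_mul_I _

lemma norm_Bk (ξ u : ℝ) : ‖Bk ξ u‖ ≤ (1 + |ξ|) * min (u ^ 2) |u| := by
  unfold Bk
  rw [norm_mul, Complex.norm_real, Real.norm_eq_abs]
  split_ifs with h
  · have := @Real.norm_exp_I_mul_ofReal_sub_one_le (ξ * u)
    rw [min_eq_left (by rw [← sq_abs]; nlinarith [abs_nonneg u])]
    rw [Complex.ofReal_mul, ← mul_assoc, Real.norm_eq_abs, abs_mul] at this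
    calc _ ≤ (|ξ| * |u|) * |u| := by gcongr
      _ = |ξ| * u ^ 2 := by rw [← sq_abs u]; ring
      _ ≤ _ := by nlinarith [sq_nonneg u]
  · rw [min_eq_right (by rw [← sq_abs]; nlinarith [abs_nonneg u]), sub_zero, norm_expI]
    nlinarith [abs_nonneg u, abs_nonneg ξ, mul_nonneg (abs_nonneg ξ) (abs_nonneg u)]

lemma Bk_meas : Measurable (Function.uncurry Bk) := by
  unfold Bk Function.uncurry
  refine Measurable.mul (Measurable.sub (by fun_prop) ?_) (by fun_prop)
  exact Measurable.ite (measurableSet_le (by fun_prop) (by fun_prop)) (by fun_prop) (by fun_prop)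

/-- integrand -/
noncomputable def Fk (ξ u : ℝ) : ℂ := Complex.exp (Complex.I * ξ * u) - 1 -
      (if |u| ≤ 1 then Complex.I * ξ * u else 0)

lemma Fk_meas (ξ : ℝ) : Measurable (Fk ξ) := by
  unfold Fk
  refine Measurable.sub (by fun_prop) ?_
  exact Measurable.ite (measurableSet_le (by fun_prop) (by fun_prop)) (by fun_prop) (by fun_prop)

lemma Fk_deriv (ξ u : ℝ) : HasDerivAt (fun ξ => Fk ξ u) (Complex.I * Bk ξ u) ξ := by
  unfold Fk Bk
  have h1 : HasDerivAt (fun ξ : ℝ => Complex.I * ξ * u) (Complex.I * u) ξ := by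
    have := ((Complex.ofRealCLM.hasDerivAt (x := ξ)).const_mul Complex.I).mul_const (u : ℂ)
    simpa using this
  split_ifs with h
  · exact ((h1.cexp.sub_const 1).sub h1).congr_deriv (by ring)
  · exact ((h1.cexp.sub_const 1).sub_const 0).congr_deriv (by ring)

lemma norm_Fk (ξ u : ℝ) : ‖Fk ξ u‖ ≤ ((1 + |ξ|) * min (u ^ 2) |u|) * |ξ| := by
  have := Convex.norm_image_sub_le_of_norm_hasDerivWithin_le (f := fun ξ => Fk ξ u)
    (f' := fun ξ => Complex.I * Bk ξ u) (s := Set.Icc (-|ξ|) |ξ|) (x := 0) (y := ξ)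
    (C := (1 + |ξ|) * min (u ^ 2) |u|) (fun x _ => (Fk_deriv x u).hasDerivWithinAt) ?_ (convex_Icc _ _)
    ⟨by simp, by simp⟩ ⟨neg_abs_le _, le_abs_self _⟩
  · simpa [Fk] using this
  · intro x hx
    have hx' : |x| ≤ |ξ| := abs_le.2 hx
    rw [norm_mul, Complex.norm_I, one_mul]
    refine (norm_Bk x u).trans ?_
    gcongr

/-- log of psi -/
noncomputable def eta (α m₁ m₂ β ξ : ℝ) : ℂ :=
  Complex.I * ξ * (Gamma12 α m₁ m₂ β) + ∫ u, Fk ξ u ∂(nuStable α m₁ m₂)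

/-- derivative of eta -/
noncomputable def eta' (α m₁ m₂ β ξ : ℝ) : ℂ :=
  Complex.I * (Gamma12 α m₁ m₂ β) + Complex.I * ∫ u, Bk ξ u ∂(nuStable α m₁ m₂)

lemma psi_eq (α m₁ m₂ β ξ : ℝ) : psi12 α m₁ m₂ β ξ = Complex.exp (eta α m₁ m₂ β ξ) := rfl

lemma eta_deriv {α m₁ m₂ : ℝ} (β : ℝ) (hα : 1 < α) (hα2 : α < 2) (hm₁ : 0 ≤ m₁) (hm₂ : 0 ≤ m₂) (ξ : ℝ) :
    HasDerivAt (eta α m₁ m₂ β) (eta' α m₁ m₂ β ξ) ξ := by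
  have hM := integrable_M hα hα2 hm₁ hm₂
  unfold eta eta'
  have h1 : HasDerivAt (fun ξ : ℝ => Complex.I * ξ * (Gamma12 α m₁ m₂ β : ℂ)) (Complex.I * (Gamma12 α m₁ m₂ β : ℂ)) ξ := by
    have := ((Complex.ofRealCLM.hasDerivAt (x := ξ)).const_mul Complex.I).mul_const (Gamma12 α m₁ m₂ β : ℂ)
    simpa using this
  refine h1.add ?_
  rw [← integral_const_mul]
  refine (hasDerivAt_integral_of_dominated_loc_of_deriv_le (F := Fk) (F' := fun ξ u => Complex.I * Bk ξ u)
    (bound := fun u => (1 + (|ξ| + 1)) * min (u ^ 2) |u|)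
    (Metric.ball_mem_nhds ξ one_pos) ?_ ?_ ?_ ?_ ?_ ?_).2
  · exact Filter.Eventually.of_forall fun x => (Fk_meas x).aestronglyMeasurable
  · refine ((hM.const_mul (1 + |ξ|)).mul_const |ξ|).mono' (Fk_meas ξ).aestronglyMeasurable ?_
    exact Filter.Eventually.of_forall fun u => norm_Fk ξ u
  · exact ((Bk_meas.comp measurable_prodMk_left).const_mul _).aestronglyMeasurable
  · refine Filter.Eventually.of_forall fun u x hx => ?_
    rw [norm_mul, Complex.norm_I, one_mul]
    refine (norm_Bk x u).trans ?_
    have : |x| ≤ |ξ| + 1 := by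
      rw [Metric.mem_ball, Real.dist_eq] at hx
      have := abs_sub_abs_le_abs_sub x ξ
      linarith
    gcongr
  · exact hM.const_mul _
  · exact Filter.Eventually.of_forall fun u x _ => Fk_deriv x u

lemma norm_eta' {α m₁ m₂ : ℝ} (β : ℝ) (hα : 1 < α) (hα2 : α < 2) (hm₁ : 0 ≤ m₁) (hm₂ : 0 ≤ m₂) :
    ∃ C, 0 ≤ C ∧ ∀ ξ, ‖eta' α m₁ m₂ β ξ‖ ≤ C * (1 + |ξ|) := by
  have hM := integrable_M hα hα2 hm₁ hm₂
  have hC : 0 ≤ ∫ u, min (u ^ 2) |u| ∂(nuStable α m₁ m₂) := integral_nonneg fun u => by positivity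
  refine ⟨|Gamma12 α m₁ m₂ β| + ∫ u, min (u ^ 2) |u| ∂(nuStable α m₁ m₂), by positivity, fun ξ => ?_⟩
  unfold eta'
  refine (norm_add_le _ _).trans ?_
  rw [norm_mul, norm_mul, Complex.norm_I, one_mul, one_mul, Complex.norm_real, Real.norm_eq_abs]
  have := norm_integral_le_of_norm_le (hM.const_mul (1 + |ξ|)) (Filter.Eventually.of_forall fun u => norm_Bk ξ u)
  rw [integral_const_mul] at this
  nlinarith [abs_nonneg ξ, abs_nonneg (Gamma12 α m₁ m₂ β), mul_nonneg (abs_nonneg ξ) (abs_nonneg (Gamma12 α m₁ m₂ β))]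

lemma eta_re {α m₁ m₂ : ℝ} (β : ℝ) (hα : 1 < α) (hα2 : α < 2) (hm₁ : 0 ≤ m₁) (hm₂ : 0 ≤ m₂) (ξ : ℝ) :
    (eta α m₁ m₂ β ξ).re = ∫ u, dens α m₁ m₂ u * (Real.cos (ξ * u) - 1) := by
  have hM := integrable_M hα hα2 hm₁ hm₂
  have hF : Integrable (Fk ξ) (nuStable α m₁ m₂) := by
    refine ((hM.const_mul (1 + |ξ|)).mul_const |ξ|).mono' (Fk_meas ξ).aestronglyMeasurable ?_
    exact Filter.Eventually.of_forall fun u => norm_Fk ξ u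
  unfold eta
  have h := integral_nu hm₁ hm₂ (α := α) (fun u => Real.cos (ξ * u) - 1)
  simp only [smul_eq_mul] at h
  rw [← h, Complex.add_re]
  have h2 : (∫ u, Fk ξ u ∂(nuStable α m₁ m₂)).re = ∫ u, (Fk ξ u).re ∂(nuStable α m₁ m₂) :=
    (integral_re hF).symm
  rw [h2]
  have h3 : ∀ u, (Fk ξ u).re = Real.cos (ξ * u) - 1 := by
    intro u
    unfold Fk
    rw [show Complex.I * ξ * u = ((ξ * u : ℝ) : ℂ) * Complex.I by push_cast; ring]
    split_ifs <;> simp [Complex.exp_ofReal_mul_I_re, -Complex.ofReal_mul]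
  simp [h3]

lemma eta_re_scale {α m₁ m₂ : ℝ} (β : ℝ) (hα : 1 < α) (hα2 : α < 2) (hm₁ : 0 ≤ m₁) (hm₂ : 0 ≤ m₂) (ξ : ℝ)
    {s : ℝ} (hs : 0 < s) :
    (eta α m₁ m₂ β (s * ξ)).re = s ^ α * (eta α m₁ m₂ β ξ).re := by
  rw [eta_re β hα hα2 hm₁ hm₂, eta_re β hα hα2 hm₁ hm₂]
  have := Measure.integral_comp_mul_left (fun u => dens α m₁ m₂ u * (Real.cos (ξ * u) - 1)) s
  simp only [dens_scale hs, smul_eq_mul, mul_assoc, integral_const_mul] at this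
  have h1 : (fun u => dens α m₁ m₂ u * (Real.cos (s * ξ * u) - 1)) =
     fun u => dens α m₁ m₂ u * (Real.cos (ξ * (s * u)) - 1) := by
    funext u; congr 3; ring
  rw [h1]
  rw [abs_of_pos (by positivity)] at this
  have h2 : s ^ α * s ^ (-α - 1) = s⁻¹ := by
    rw [← Real.rpow_add hs, ← Real.rpow_neg_one]; congr 1; ring
  have h3 : s⁻¹ ≠ 0 := by positivity
  apply mul_left_cancel₀ h3
  calc _ = s ^ α * (s ^ (-α - 1) * ∫ u, dens α m₁ m₂ u * (Real.cos (ξ * (s * u)) - 1)) := by rw [← mul_assoc, h2]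
    _ = _ := by rw [this]; ring

lemma eta_re_nonpos {α m₁ m₂ : ℝ} (β : ℝ) (hα : 1 < α) (hα2 : α < 2) (hm₁ : 0 ≤ m₁) (hm₂ : 0 ≤ m₂) (ξ : ℝ) :
    (eta α m₁ m₂ β ξ).re ≤ 0 := by
  rw [eta_re β hα hα2 hm₁ hm₂]
  refine integral_nonpos fun u => ?_
  exact mul_nonpos_of_nonneg_of_nonpos (dens_nonneg hm₁ hm₂ u) (by linarith [Real.cos_le_one (ξ * u)])

lemma eta_re_le {α m₁ m₂ : ℝ} (β : ℝ) (hα : 1 < α) (hα2 : α < 2) (hm₁ : 0 ≤ m₁) (hm₂ : 0 ≤ m₂) (ξ : ℝ)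
    {s : ℝ} (hs : 0 < s) (hs1 : s ≤ 1) :
    (eta α m₁ m₂ β ξ).re ≤ (eta α m₁ m₂ β (s * ξ)).re := by
  rw [eta_re_scale β hα hα2 hm₁ hm₂ ξ hs]
  have := eta_re_nonpos β hα hα2 hm₁ hm₂ ξ
  have h : s ^ α ≤ 1 := Real.rpow_le_one hs.le hs1 (by linarith)
  nlinarith

open FourierTransform in
lemma fT_eq (f : SchwartzMap ℝ ℂ) (ξ : ℝ) : fourierT f ξ = (𝓕 f : SchwartzMap ℝ ℂ) ((2 * Real.pi)⁻¹ * ξ) := by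
  rw [SchwartzMap.fourier_coe, Real.fourier_eq']
  unfold fourierT
  congr 1; funext v
  rw [smul_eq_mul, mul_comm]
  congr 2
  have : (Real.pi : ℂ) ≠ 0 := by exact_mod_cast Real.pi_ne_zero
  simp
  field_simp

lemma fT_int (f : SchwartzMap ℝ ℂ) (n : ℕ) : Integrable (fun ξ => |ξ| ^ n * ‖fourierT f ξ‖) := by
  have h := (SchwartzMap.integrable_pow_mul volume (FourierTransform.fourier f : SchwartzMap ℝ ℂ) n).comp_mul_left'
    (R := (2 * Real.pi)⁻¹) (by positivity)
  refine (h.const_mul ((2 * Real.pi) ^ n)).congr (Filter.Eventually.of_forall fun ξ => ?_)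
  simp only [fT_eq, norm_mul, mul_pow, ← mul_assoc, Real.norm_eq_abs]
  rw [abs_of_pos (a := (2 * Real.pi)⁻¹) (by positivity), ← mul_pow, ← mul_pow,
    mul_inv_cancel₀ (by positivity), one_pow, one_mul]

lemma fT_cont (f : SchwartzMap ℝ ℂ) : Continuous (fourierT f) := by
  have : fourierT f = fun ξ => (FourierTransform.fourier f : SchwartzMap ℝ ℂ) ((2 * Real.pi)⁻¹ * ξ) := by
    funext ξ; exact fT_eq f ξ
  rw [this]
  exact (SchwartzMap.continuous _).comp (by fun_prop)

lemma fT_inv (f : SchwartzMap ℝ ℂ) (y : ℝ) :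
    ((1 / (2 * Real.pi) : ℝ) : ℂ) * ∫ ξ : ℝ, fourierT f ξ * Complex.exp (Complex.I * ξ * y) = f y := by
  have h1 : f y = FourierTransformInv.fourierInv (FourierTransform.fourier f : SchwartzMap ℝ ℂ) y := by
    rw [FourierTransform.fourierInv_fourier_eq]
  rw [h1, SchwartzMap.fourierInv_coe, Real.fourierInv_eq']
  have h2 := Measure.integral_comp_mul_left (fun ξ : ℝ => fourierT f ξ * Complex.exp (Complex.I * ξ * y)) (2 * Real.pi)
  have hp : (0:ℝ) < 2 * Real.pi := by positivity
  rw [abs_of_pos (by positivity), Complex.real_smul, ← one_div] at h2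
  rw [← h2]
  congr 1; funext v
  rw [fT_eq, ← mul_assoc, inv_mul_cancel₀ hp.ne', one_mul, smul_eq_mul, mul_comm]
  congr 2
  simp; ring

lemma fT_deriv (f : SchwartzMap ℝ ℂ) (ξ : ℝ) :
    fourierT (SchwartzMap.derivCLM ℂ ℂ f) ξ = Complex.I * ξ * fourierT f ξ := by
  rw [fT_eq, fT_eq, SchwartzMap.fourier_coe, SchwartzMap.fourier_coe]
  have h0 : ⇑(SchwartzMap.derivCLM ℂ ℂ f) = deriv f := by
    funext x; exact SchwartzMap.derivCLM_apply ℂ f x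
  have h1 : Integrable (deriv f) := by
    rw [← h0]; exact SchwartzMap.integrable _
  rw [h0, Real.fourier_deriv f.integrable f.differentiable h1]
  simp only [smul_eq_mul]
  congr 1
  have : (Real.pi : ℂ) ≠ 0 := by exact_mod_cast Real.pi_ne_zero
  push_cast
  field_simp

lemma fT_inv_deriv (f : SchwartzMap ℝ ℂ) (y : ℝ) :
    ((1 / (2 * Real.pi) : ℝ) : ℂ) * ∫ ξ : ℝ, Complex.I * ξ * fourierT f ξ * Complex.exp (Complex.I * ξ * y) =
      deriv f y := by
  have := fT_inv (SchwartzMap.derivCLM ℂ ℂ f) y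
  simp only [fT_deriv] at this
  rw [this]; rfl

lemma fT_int' (f : SchwartzMap ℝ ℂ) (y : ℝ) :
    Integrable (fun ξ : ℝ => Complex.I * ξ * fourierT f ξ * Complex.exp (Complex.I * ξ * y)) := by
  refine (fT_int f 1).mono' ?_ (Filter.Eventually.of_forall fun ξ => ?_)
  · have := fT_cont f
    exact Continuous.aestronglyMeasurable (by fun_prop)
  · rw [norm_mul, norm_expI]; simp

/-- the multiplier -/
noncomputable def Gm (α m₁ m₂ β x ξ t : ℝ) : ℂ :=
  Complex.exp (Complex.I * ξ * x * ((Real.exp (-t) : ℝ) : ℂ) +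
    (eta α m₁ m₂ β ξ - eta α m₁ m₂ β (Real.exp (-t) * ξ)))

lemma Pt_eq (α m₁ m₂ β x t : ℝ) (g : ℝ → ℂ) : Pt α m₁ m₂ β t g x =
    ((1 / (2 * Real.pi) : ℝ) : ℂ) * ∫ ξ : ℝ, fourierT g ξ * Gm α m₁ m₂ β x ξ t := by
  unfold Pt Gm
  congr 2; funext ξ
  rw [psi_eq, psi_eq, Complex.exp_add, Complex.exp_sub]
  ring

lemma Gm_zero (α m₁ m₂ β x ξ : ℝ) : Gm α m₁ m₂ β x ξ 0 = Complex.exp (Complex.I * ξ * x) := by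
  simp [Gm]

lemma Gm_norm {α m₁ m₂ : ℝ} (β : ℝ) (hα : 1 < α) (hα2 : α < 2) (hm₁ : 0 ≤ m₁) (hm₂ : 0 ≤ m₂) (x ξ : ℝ)
    {t : ℝ} (ht : 0 ≤ t) : ‖Gm α m₁ m₂ β x ξ t‖ ≤ 1 := by
  unfold Gm
  have h := eta_re_le β hα hα2 hm₁ hm₂ ξ (Real.exp_pos (-t)) (Real.exp_le_one_iff.2 (by linarith))
  rw [Complex.norm_exp, Real.exp_le_one_iff]
  have : (Complex.I * ξ * x * ((Real.exp (-t) : ℝ) : ℂ)).re = 0 := by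
    rw [show Complex.I * ξ * x * ((Real.exp (-t) : ℝ) : ℂ) = ((ξ * x * Real.exp (-t) : ℝ) : ℂ) * Complex.I by
      push_cast; ring]
    exact Complex.re_ofReal_mul _ _ |>.trans (by simp)
  rw [Complex.add_re, this, Complex.sub_re]
  linarith

/-- the logarithmic derivative of the multiplier -/
noncomputable def Lm (α m₁ m₂ β x ξ t : ℝ) : ℂ :=
  ξ * Real.exp (-t) * (eta' α m₁ m₂ β (Real.exp (-t) * ξ) - Complex.I * x)

lemma Gm_deriv {α m₁ m₂ : ℝ} (β : ℝ) (hα : 1 < α) (hα2 : α < 2) (hm₁ : 0 ≤ m₁) (hm₂ : 0 ≤ m₂) (x ξ t : ℝ) :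
    HasDerivAt (Gm α m₁ m₂ β x ξ) (Gm α m₁ m₂ β x ξ t * Lm α m₁ m₂ β x ξ t) t := by
  have he : HasDerivAt (fun t : ℝ => Real.exp (-t)) (-Real.exp (-t)) t := by
    simpa using (hasDerivAt_neg t).exp
  have h1 : HasDerivAt (fun t : ℝ => eta α m₁ m₂ β (Real.exp (-t) * ξ))
      ((-Real.exp (-t) * ξ) • eta' α m₁ m₂ β (Real.exp (-t) * ξ)) t :=
    HasDerivAt.scomp (g₁ := eta α m₁ m₂ β) t (eta_deriv β hα hα2 hm₁ hm₂ (Real.exp (-t) * ξ)) (he.mul_const ξ)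
  have h2 := (he.ofReal_comp).const_mul (Complex.I * ξ * x)
  have h3 := (h2.add ((hasDerivAt_const t (eta α m₁ m₂ β ξ)).sub h1)).cexp
  refine h3.congr_deriv ?_
  simp only [Gm, Lm, Complex.real_smul, Pi.add_apply, Pi.sub_apply]
  push_cast
  ring

lemma Lm_norm {α m₁ m₂ : ℝ} (β : ℝ) (hα : 1 < α) (hα2 : α < 2) (hm₁ : 0 ≤ m₁) (hm₂ : 0 ≤ m₂) (x : ℝ) :
    ∃ C, 0 ≤ C ∧ ∀ ξ t, 0 ≤ t → ‖Lm α m₁ m₂ β x ξ t‖ ≤ C * (|ξ| + |ξ| ^ 2) := by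
  obtain ⟨C, hC, h⟩ := norm_eta' β hα hα2 hm₁ hm₂
  refine ⟨C + |x|, by positivity, fun ξ t ht => ?_⟩
  have he : Real.exp (-t) ≤ 1 := Real.exp_le_one_iff.2 (by linarith)
  have he0 := Real.exp_pos (-t)
  unfold Lm
  rw [norm_mul, norm_mul, Complex.norm_real, Complex.norm_real, Real.norm_eq_abs, Real.norm_of_nonneg he0.le]
  have h1 : ‖eta' α m₁ m₂ β (Real.exp (-t) * ξ) - Complex.I * x‖ ≤ (C + |x|) * (1 + |ξ|) := by
    refine (norm_sub_le _ _).trans ?_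
    have h2 := h (Real.exp (-t) * ξ)
    rw [abs_mul, abs_of_pos he0] at h2
    have h3 : Real.exp (-t) * |ξ| ≤ |ξ| := mul_le_of_le_one_left (abs_nonneg _) he
    have h4 : C * (1 + Real.exp (-t) * |ξ|) ≤ C * (1 + |ξ|) := by gcongr
    have h5 : ‖Complex.I * (x : ℂ)‖ = |x| := by simp
    rw [h5]
    nlinarith [mul_nonneg (abs_nonneg x) (abs_nonneg ξ)]
  calc _ ≤ |ξ| * 1 * ((C + |x|) * (1 + |ξ|)) := by gcongr
    _ = _ := by ring

lemma Gm_diff {α m₁ m₂ : ℝ} (β : ℝ) (hα : 1 < α) (hα2 : α < 2) (hm₁ : 0 ≤ m₁) (hm₂ : 0 ≤ m₂) (x : ℝ) :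
    ∃ C, 0 ≤ C ∧ ∀ ξ t, 0 ≤ t → ‖Gm α m₁ m₂ β x ξ t - Gm α m₁ m₂ β x ξ 0‖ ≤ C * (|ξ| + |ξ| ^ 2) * t := by
  obtain ⟨C, hC, h⟩ := Lm_norm β hα hα2 hm₁ hm₂ x
  refine ⟨C, hC, fun ξ t ht => ?_⟩
  have := Convex.norm_image_sub_le_of_norm_hasDerivWithin_le (f := Gm α m₁ m₂ β x ξ) (s := Set.Ici 0) (x := 0) (y := t)
    (fun s _ => (Gm_deriv β hα hα2 hm₁ hm₂ x ξ s).hasDerivWithinAt) (C := C * (|ξ| + |ξ| ^ 2)) ?_ (convex_Ici 0)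
    (by simp) ht
  · simpa [abs_of_nonneg ht] using this
  · intro s hs
    rw [norm_mul]
    refine (mul_le_of_le_one_left (norm_nonneg _) (Gm_norm β hα hα2 hm₁ hm₂ x ξ hs)).trans (h ξ s hs)

lemma eta_cont {α m₁ m₂ : ℝ} (β : ℝ) (hα : 1 < α) (hα2 : α < 2) (hm₁ : 0 ≤ m₁) (hm₂ : 0 ≤ m₂) :
    Continuous (eta α m₁ m₂ β) :=
  continuous_iff_continuousAt.2 fun ξ => (eta_deriv β hα hα2 hm₁ hm₂ ξ).continuousAt

lemma Gm_cont {α m₁ m₂ : ℝ} (β : ℝ) (hα : 1 < α) (hα2 : α < 2) (hm₁ : 0 ≤ m₁) (hm₂ : 0 ≤ m₂) (x t : ℝ) :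
    Continuous (fun ξ => Gm α m₁ m₂ β x ξ t) := by
  have := eta_cont β hα hα2 hm₁ hm₂
  unfold Gm
  fun_prop

lemma limit1 {α m₁ m₂ : ℝ} (β : ℝ) (hα : 1 < α) (hα2 : α < 2) (hm₁ : 0 ≤ m₁) (hm₂ : 0 ≤ m₂)
    (f : SchwartzMap ℝ ℂ) (x : ℝ) :
    Filter.Tendsto (fun t : ℝ => (Pt α m₁ m₂ β t (⇑f) x - f x) / (t : ℂ))
      (nhdsWithin 0 (Set.Ioi 0))
      (nhds (((1 / (2 * Real.pi) : ℝ) : ℂ) *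
        ∫ ξ : ℝ, fourierT f ξ * (Gm α m₁ m₂ β x ξ 0 * Lm α m₁ m₂ β x ξ 0))) := by
  obtain ⟨C, hC, hd⟩ := Gm_diff β hα hα2 hm₁ hm₂ x
  have hfc := fT_cont f
  have hGint : ∀ t, 0 ≤ t → Integrable (fun ξ => fourierT f ξ * Gm α m₁ m₂ β x ξ t) := by
    intro t ht
    have hG := Gm_cont β hα hα2 hm₁ hm₂ x t
    refine (fT_int f 0).mono' (hfc.mul hG).aestronglyMeasurable (Filter.Eventually.of_forall fun ξ => ?_)
    rw [norm_mul, pow_zero, one_mul]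
    exact mul_le_of_le_one_right (norm_nonneg _) (Gm_norm β hα hα2 hm₁ hm₂ x ξ ht)
  have hlim : Filter.Tendsto (fun t : ℝ => ∫ ξ : ℝ, fourierT f ξ *
      ((Gm α m₁ m₂ β x ξ t - Gm α m₁ m₂ β x ξ 0) / (t : ℂ))) (nhdsWithin 0 (Set.Ioi 0))
      (nhds (∫ ξ : ℝ, fourierT f ξ * (Gm α m₁ m₂ β x ξ 0 * Lm α m₁ m₂ β x ξ 0))) := by
    refine tendsto_integral_filter_of_dominated_convergence
      (fun ξ => C * (|ξ| ^ 1 * ‖fourierT f ξ‖ + |ξ| ^ 2 * ‖fourierT f ξ‖)) ?_ ?_ ?_ ?_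
    · refine Filter.Eventually.of_forall fun t => Continuous.aestronglyMeasurable ?_
      have h1 := Gm_cont β hα hα2 hm₁ hm₂ x t
      have h2 := Gm_cont β hα hα2 hm₁ hm₂ x 0
      exact hfc.mul ((h1.sub h2).div_const _)
    · filter_upwards [self_mem_nhdsWithin] with t ht
      refine Filter.Eventually.of_forall fun ξ => ?_
      have ht : 0 < t := ht
      rw [norm_mul, norm_div, Complex.norm_real, Real.norm_of_nonneg ht.le]
      have : ‖Gm α m₁ m₂ β x ξ t - Gm α m₁ m₂ β x ξ 0‖ / t ≤ C * (|ξ| + |ξ| ^ 2) := by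
        rw [div_le_iff₀ ht]; exact hd ξ t ht.le
      calc _ ≤ ‖fourierT f ξ‖ * (C * (|ξ| + |ξ| ^ 2)) := by gcongr
        _ = _ := by ring
    · exact ((fT_int f 1).add (fT_int f 2)).const_mul C
    · refine Filter.Eventually.of_forall fun ξ => Filter.Tendsto.const_mul _ ?_
      have h := (Gm_deriv β hα hα2 hm₁ hm₂ x ξ 0).tendsto_slope_zero_right
      refine h.congr fun t => ?_
      rw [zero_add, Complex.real_smul, Complex.ofReal_inv, div_eq_inv_mul]
  refine (hlim.const_mul (((1 / (2 * Real.pi) : ℝ) : ℂ))).congr' ?_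
  filter_upwards [self_mem_nhdsWithin] with t ht
  have ht : 0 < t := ht
  rw [Pt_eq, ← fT_inv f x]
  simp only [← Gm_zero α m₁ m₂ β]
  rw [← mul_sub, ← integral_sub (hGint t ht.le) (hGint 0 le_rfl), mul_div_assoc, ← integral_div]
  congr 2; funext ξ
  ring

theorem stmt_13 (α m₁ m₂ β : ℝ) (hα : 1 < α) (hα2 : α < 2)
    (hm₁ : 0 ≤ m₁) (hm₂ : 0 ≤ m₂) (hm : 0 < m₁ + m₂)
    (f : SchwartzMap ℝ ℂ) (x : ℝ) :
    Integrable (fun u : ℝ =>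
      (deriv (⇑f) (x + u) - (if |u| ≤ 1 then deriv (⇑f) x else 0)) * (u : ℂ))
      (nuStable α m₁ m₂) ∧
    Filter.Tendsto (fun t : ℝ => (Pt α m₁ m₂ β t (⇑f) x - f x) / (t : ℂ))
      (nhdsWithin 0 (Set.Ioi 0))
      (nhds (-(x : ℂ) * deriv (⇑f) x + ((Gamma12 α m₁ m₂ β : ℝ) : ℂ) * deriv (⇑f) x +
        ∫ u : ℝ, (deriv (⇑f) (x + u) - (if |u| ≤ 1 then deriv (⇑f) x else 0)) * (u : ℂ)
          ∂(nuStable α m₁ m₂))) := by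
  have hM := integrable_M hα hα2 hm₁ hm₂
  have hfc := fT_cont f
  set c : ℂ := ((1 / (2 * Real.pi) : ℝ) : ℂ) with hc
  let K : ℝ → ℝ → ℂ := fun ξ u =>
    (Complex.I * ξ * fourierT f ξ * Complex.exp (Complex.I * ξ * x)) * Bk ξ u
  have hK : Integrable (Function.uncurry K) (volume.prod (nuStable α m₁ m₂)) := by
    refine (((fT_int f 1).add (fT_int f 2)).mul_prod hM).mono' ?_ (Filter.Eventually.of_forall fun z => ?_)
    · refine Measurable.aestronglyMeasurable ?_
      have h1 : Continuous (fun z : ℝ × ℝ => Complex.I * z.1 * fourierT f z.1 * Complex.exp (Complex.I * z.1 * x)) := by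
        fun_prop
      exact h1.measurable.mul Bk_meas
    · have h1 : ‖Complex.I * z.1 * fourierT f z.1 * Complex.exp (Complex.I * z.1 * x)‖ = |z.1| * ‖fourierT f z.1‖ := by
        rw [norm_mul, norm_expI]; simp
      simp only [K, Function.uncurry, Pi.add_apply]
      rw [norm_mul, h1]
      calc _ ≤ |z.1| * ‖fourierT f z.1‖ * ((1 + |z.1|) * min (z.2 ^ 2) |z.2|) := by
            gcongr; exact norm_Bk _ _
        _ = _ := by ring
  have hinner : ∀ u : ℝ, c * ∫ ξ, K ξ u =
      (deriv (⇑f) (x + u) - (if |u| ≤ 1 then deriv (⇑f) x else 0)) * (u : ℂ) := by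
    intro u
    have h1 : (fun ξ => K ξ u) = fun ξ : ℝ =>
        (Complex.I * ξ * fourierT f ξ * Complex.exp (Complex.I * ξ * ((x + u : ℝ) : ℂ)) -
        (if |u| ≤ 1 then (1 : ℂ) else 0) * (Complex.I * ξ * fourierT f ξ * Complex.exp (Complex.I * ξ * x))) * u := by
      funext ξ
      simp only [K, Bk]
      rw [Complex.ofReal_add, mul_add, Complex.exp_add]
      ring
    rw [h1, integral_mul_const, integral_sub (fT_int' f _) ((fT_int' f x).const_mul _), integral_const_mul,
      ← fT_inv_deriv f (x + u), ← fT_inv_deriv f x]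
    split_ifs <;> ring
  have hint := (hK.integral_prod_right).const_mul c
  have hint2 : (fun u => c * ∫ ξ, Function.uncurry K (ξ, u)) = fun u : ℝ =>
      (deriv (⇑f) (x + u) - (if |u| ≤ 1 then deriv (⇑f) x else 0)) * (u : ℂ) := by
    funext u; exact hinner u
  rw [hint2] at hint
  refine ⟨hint, ?_⟩
  convert limit1 β hα hα2 hm₁ hm₂ f x using 2
  simp only [← hinner]
  rw [integral_const_mul, ← integral_integral_swap hK]
  have h2 : (fun ξ => fourierT f ξ * (Gm α m₁ m₂ β x ξ 0 * Lm α m₁ m₂ β x ξ 0)) = fun ξ : ℝ =>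
      ((Gamma12 α m₁ m₂ β : ℂ) - x) * (Complex.I * ξ * fourierT f ξ * Complex.exp (Complex.I * ξ * x)) +
      ∫ u, K ξ u ∂(nuStable α m₁ m₂) := by
    funext ξ
    simp only [K]
    rw [integral_const_mul, Gm_zero]
    simp only [Lm, eta', neg_zero, Real.exp_zero, one_mul, Complex.ofReal_one, mul_one]
    ring
  have h3 : Integrable (fun ξ => ∫ u, K ξ u ∂(nuStable α m₁ m₂)) := hK.integral_prod_left
  rw [h2, integral_add ((fT_int' f x).const_mul _) h3, integral_const_mul, mul_add,
    ← fT_inv_deriv f x]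
  ring
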